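/- arXiv:1906.07281 — 2 statements merged into one kernel-verified Lean document; each statement's English description precedes it below -/
import Mathlib

section
/- There exists a compact convex set K ⊂ ℝ² with nonempty interior whose boundary is a C¹ curve with Lipschitz-continuous derivative (i.e., ∂K admits a C¹ unit-speed parametrization z with z' uniformly Lipschitz), together with a point x ∉ K and a nonzero vector w ∈ ℝ², such that the one-sided directional derivative lim_{t→0⁺} (Π(x + t w) − Π(x))/t of the metric projection Π onto K does not exist. -/
namespace ProjCex

open Real Filter Topology

noncomputable def f (r : ℝ) : ℝ := r * sin (log r)

lemma f_zero : f 0 = 0 := by simp [f]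

lemma f_abs_le (r : ℝ) : |f r| ≤ |r| := by
  rw [f, abs_mul]
  have := abs_sin_le_one (log r)
  nlinarith [abs_nonneg r]

lemma f_lip_pos {a b : ℝ} (ha : 0 < a) (hb : 0 < b) : |f b - f a| ≤ 2 * |b - a| := by
  have h := Convex.norm_image_sub_le_of_norm_hasDerivWithin_le (f := f)
    (f' := fun r => 1 * sin (log r) + r * (cos (log r) * r⁻¹)) (s := Set.Ioi 0) (C := 2)
    (x := a) (y := b) ?_ ?_ (convex_Ioi 0) ha hb
  · simpa [Real.norm_eq_abs] using h
  · intro r hr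
    have hr' : (0:ℝ) < r := hr
    exact ((hasDerivAt_id r).mul ((hasDerivAt_log hr'.ne').sin)).hasDerivWithinAt
  · intro r hr
    have hr' : (0:ℝ) < r := hr
    have : 1 * sin (log r) + r * (cos (log r) * r⁻¹) = sin (log r) + cos (log r) := by
      field_simp
    rw [this, Real.norm_eq_abs]
    calc _ ≤ |sin (log r)| + |cos (log r)| := abs_add_le _ _
      _ ≤ 2 := by linarith [abs_sin_le_one (log r), abs_cos_le_one (log r)]

lemma f_lip {a b : ℝ} (ha : 0 ≤ a) (hb : 0 ≤ b) : |f b - f a| ≤ 2 * |b - a| := by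
  rcases ha.eq_or_lt with rfl | ha
  · rw [f_zero, sub_zero, sub_zero]
    linarith [f_abs_le b, abs_nonneg b]
  rcases hb.eq_or_lt with rfl | hb
  · rw [f_zero, zero_sub, zero_sub, abs_neg, abs_neg]
    linarith [f_abs_le a, abs_nonneg a]
  exact f_lip_pos ha hb

noncomputable def θ (s : ℝ) : ℝ := s + f |sin s| / 4

lemma abs_sin_sub_le (s u : ℝ) : |sin u - sin s| ≤ |u - s| := by
  have h := Convex.norm_image_sub_le_of_norm_hasDerivWithin_le (f := sin)
    (f' := cos) (s := Set.univ) (C := 1)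
    (x := s) (y := u) (fun x _ => (hasDerivAt_sin x).hasDerivWithinAt)
    (fun x _ => abs_cos_le_one x) convex_univ trivial trivial
  simpa [Real.norm_eq_abs] using h

lemma g_lip (s u : ℝ) : |f (|sin u|) - f (|sin s|)| ≤ 2 * |u - s| :=
  (f_lip (abs_nonneg _) (abs_nonneg _)).trans <| by
    have h1 := abs_abs_sub_abs_le_abs_sub (sin u) (sin s)
    have h2 := abs_sin_sub_le s u
    linarith

lemma θ_lip (s u : ℝ) : |θ u - θ s| ≤ 2 * |u - s| := by
  have h := g_lip s u
  have : θ u - θ s = (u - s) + (f |sin u| - f |sin s|) / 4 := by unfold θ; ring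
  rw [this]
  refine (abs_add_le _ _).trans ?_
  rw [abs_div, abs_of_pos (by norm_num : (0:ℝ) < 4)]
  linarith [abs_nonneg (u - s)]

lemma θ_mono : StrictMono θ := by
  intro s u hsu
  have h := abs_le.1 (g_lip s u)
  rw [abs_of_pos (by linarith : 0 < u - s)] at h
  have : θ u - θ s = (u - s) + (f |sin u| - f |sin s|) / 4 := by unfold θ; ring
  linarith [h.1]

lemma θ_cont : Continuous θ := by
  have : LipschitzWith 2 θ := LipschitzWith.of_dist_le_mul fun x y => by
    simpa [Real.dist_eq] using θ_lip y x
  exact this.continuous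

lemma θ_add_pi (s : ℝ) : θ (s + π) = θ s + π := by
  unfold θ; rw [sin_add_pi, abs_neg]; ring

lemma θ_zero : θ 0 = 0 := by simp [θ, f]
lemma θ_pi_half : θ (π / 2) = π / 2 := by simp [θ, f]

noncomputable def X (s : ℝ) : ℝ := ∫ u in (0:ℝ)..s, cos (θ u)
noncomputable def Y (s : ℝ) : ℝ := ∫ u in (0:ℝ)..s, sin (θ u)

lemma X_zero : X 0 = 0 := by simp [X]
lemma Y_zero : Y 0 = 0 := by simp [Y]

lemma X_deriv (s : ℝ) : HasDerivAt X (cos (θ s)) s :=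
  ((continuous_cos.comp θ_cont)).integral_hasStrictDerivAt 0 s |>.hasDerivAt
lemma Y_deriv (s : ℝ) : HasDerivAt Y (sin (θ s)) s :=
  ((continuous_sin.comp θ_cont)).integral_hasStrictDerivAt 0 s |>.hasDerivAt

lemma X_add (s : ℝ) : X (s + π) + X s = X π := by
  have h : ∀ s, HasDerivAt (fun s => X (s + π) + X s) 0 s := fun s => by
    have := ((X_deriv (s + π)).comp_add_const s π).add (X_deriv s)
    rw [θ_add_pi, cos_add_pi] at this
    have e := this.congr_deriv (neg_add_cancel _)
    exact e
  have := is_const_of_deriv_eq_zero (fun s => (h s).differentiableAt) (fun s => (h s).deriv) s 0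
  simpa [X_zero] using this

lemma Y_add (s : ℝ) : Y (s + π) + Y s = Y π := by
  have h : ∀ s, HasDerivAt (fun s => Y (s + π) + Y s) 0 s := fun s => by
    have := ((Y_deriv (s + π)).comp_add_const s π).add (Y_deriv s)
    rw [θ_add_pi, sin_add_pi] at this
    have e := this.congr_deriv (neg_add_cancel _)
    exact e
  have := is_const_of_deriv_eq_zero (fun s => (h s).differentiableAt) (fun s => (h s).deriv) s 0
  simpa [Y_zero] using this

lemma X_per : Function.Periodic X (2 * π) := fun s => by
  have h1 := X_add s
  have h2 := X_add (s + π)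
  rw [show s + 2 * π = s + π + π by ring]; linarith
lemma Y_per : Function.Periodic Y (2 * π) := fun s => by
  have h1 := Y_add s
  have h2 := Y_add (s + π)
  rw [show s + 2 * π = s + π + π by ring]; linarith

noncomputable def F (s a b : ℝ) : ℝ := (a - X s) * sin (θ s) - (b - Y s) * cos (θ s)

lemma F_per (a b : ℝ) : Function.Periodic (fun s => F s a b) (2 * π) := fun s => by
  simp only [F]
  rw [X_per, Y_per, show s + 2 * π = s + π + π by ring, θ_add_pi, θ_add_pi]
  simp

lemma F_self (s : ℝ) : F s (X s) (Y s) = 0 := by simp [F]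

lemma h_deriv (s u : ℝ) : HasDerivAt (fun u => F s (X u) (Y u)) (-sin (θ u - θ s)) u := by
  have := (((X_deriv u).sub_const (X s)).mul_const (sin (θ s))).sub
    (((Y_deriv u).sub_const (Y s)).mul_const (cos (θ s)))
  rw [sin_sub]
  exact this.congr_deriv (by ring)

lemma F_neg' (s u : ℝ) (h1 : s < u) (h2 : u < s + 2 * π) : F s (X u) (Y u) < 0 := by
  have hc : Continuous (fun u => F s (X u) (Y u)) :=
    continuous_iff_continuousAt.2 fun u => (h_deriv s u).continuousAt
  have hpi := pi_pos
  rcases le_or_gt u (s + π) with h | h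
  · have ha : StrictAntiOn (fun u => F s (X u) (Y u)) (Set.Icc s (s + π)) := by
      apply strictAntiOn_of_deriv_neg (convex_Icc _ _) hc.continuousOn
      intro v hv
      rw [interior_Icc] at hv
      rw [(h_deriv s v).deriv]
      have := sin_pos_of_pos_of_lt_pi (x := θ v - θ s) (by linarith [θ_mono hv.1])
        (by linarith [θ_mono hv.2, θ_add_pi s])
      linarith
    have := ha ⟨le_rfl, by linarith⟩ ⟨h1.le, h⟩ h1
    simpa [F_self] using this
  · have ha : StrictMonoOn (fun u => F s (X u) (Y u)) (Set.Icc (s + π) (s + 2 * π)) := by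
      apply strictMonoOn_of_deriv_pos (convex_Icc _ _) hc.continuousOn
      intro v hv
      rw [interior_Icc] at hv
      rw [(h_deriv s v).deriv]
      have e : θ (s + 2 * π) = θ s + 2 * π := by
        rw [show s + 2 * π = s + π + π by ring, θ_add_pi, θ_add_pi]; ring
      have := sin_pos_of_pos_of_lt_pi (x := θ v - θ s - π)
        (by linarith [θ_mono hv.1, θ_add_pi s])
        (by linarith [θ_mono hv.2])
      rw [sin_sub_pi] at this
      exact this
    have := ha ⟨h.le, h2.le⟩ ⟨by linarith, le_rfl⟩ h2
    simp only [X_per s, Y_per s, F_self] at this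
    exact this

/-- either equal points, or strictly inside -/
lemma F_neg (s u : ℝ) : (∃ n : ℤ, u = s + n * (2 * π)) ∨ F s (X u) (Y u) < 0 := by
  obtain ⟨n, hn⟩ := existsUnique_add_zsmul_mem_Ico (two_pi_pos) u s |>.exists
  have hX : X (u + n • (2 * π)) = X u := X_per.zsmul n u
  have hY : Y (u + n • (2 * π)) = Y u := Y_per.zsmul n u
  rcases hn.1.eq_or_lt with h | h
  · left
    refine ⟨-n, ?_⟩
    rw [h]; simp
  · right
    have := F_neg' s _ h hn.2
    rwa [hX, hY] at this

lemma F_le (s u : ℝ) : F s (X u) (Y u) ≤ 0 := by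
  rcases F_neg s u with ⟨n, rfl⟩ | h
  · have hX : X (s + n • (2 * π)) = X s := X_per.zsmul n s
    have hY : Y (s + n • (2 * π)) = Y s := Y_per.zsmul n s
    rw [zsmul_eq_mul] at hX hY
    rw [hX, hY, F_self]
  · exact h.le

lemma center_neg (s : ℝ) : F s (X π / 2) (Y π / 2) < 0 := by
  have e : F s (X π / 2) (Y π / 2) = (F s (X 0) (Y 0) + F s (X π) (Y π)) / 2 := by
    simp only [F, X_zero, Y_zero]; ring
  rw [e]
  have h0 := F_le s 0
  have h1 := F_le s π
  rcases F_neg s 0 with ⟨n, hn⟩ | h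
  · rcases F_neg s π with ⟨m, hm⟩ | h
    · exfalso
      have : ((1:ℤ):ℝ) = ((2 * (m - n) : ℤ) : ℝ) := by
        push_cast
        apply mul_right_cancel₀ pi_pos.ne'
        linear_combination hm - hn
      have := Int.cast_injective this
      omega
    · linarith
  · linarith

lemma tangent_zero (s c : ℝ)
    (H : ∀ u, F u (X s + c * cos (θ s)) (Y s + c * sin (θ s)) ≤ 0) : c = 0 := by
  have key : ∀ u, F u (X s + c * cos (θ s)) (Y s + c * sin (θ s)) =
      F u (X s) (Y s) + c * sin (θ u - θ s) := by
    intro u; simp only [F, sin_sub]; ring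
  have hc : ∀ s, Continuous (fun u => F s (X u) (Y u)) := fun s =>
    continuous_iff_continuousAt.2 fun u => (h_deriv s u).continuousAt
  have hbd : ∀ ε > 0, ∃ δ > 0, δ < ε ∧ ∀ u v, |u - v| ≤ δ → |θ u - θ v| < π / 2 := by
    intro ε hε
    refine ⟨min (ε / 2) (1 / 2), by positivity, ?_, ?_⟩
    · exact (min_le_left _ _).trans_lt (by linarith)
    · intro u v h
      have := θ_lip v u
      have := h.trans (min_le_right _ _)
      linarith [pi_gt_three]
  apply le_antisymm
  · by_contra! hpos
    obtain ⟨δ, hδ, hδc, hb⟩ := hbd c hpos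
    set u := s + δ with hu
    have hsu : s < u := by linarith
    obtain ⟨v, hv, hv'⟩ := exists_hasDerivAt_eq_slope (fun v => F u (X v) (Y v))
      _ hsu (hc u).continuousOn (fun v _ => h_deriv u v)
    rw [F_self, eq_div_iff (by linarith)] at hv'
    have h1 := hb u s (by rw [hu, add_sub_cancel_left, abs_of_pos hδ])
    have hs := θ_mono hsu
    have h2 := θ_mono hv.1
    have h3 := θ_mono hv.2
    rw [abs_of_pos (by linarith)] at h1
    have h4 : sin (θ u - θ v) ≤ sin (θ u - θ s) :=
      sin_le_sin_of_le_of_le_pi_div_two (by linarith [pi_pos]) h1.le (by linarith)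
    have h5 : 0 < sin (θ u - θ s) := sin_pos_of_pos_of_lt_pi (by linarith) (by linarith [pi_pos])
    have h6 := H u
    rw [key] at h6
    have h7 : -sin (θ v - θ u) = sin (θ u - θ v) := by rw [← sin_neg]; ring_nf
    rw [h7, hu, add_sub_cancel_left, ← hu] at hv'
    nlinarith
  · by_contra! hneg
    obtain ⟨δ, hδ, hδc, hb⟩ := hbd (-c) (by linarith)
    set u := s - δ with hu
    have hsu : u < s := by linarith
    obtain ⟨v, hv, hv'⟩ := exists_hasDerivAt_eq_slope (fun v => F u (X v) (Y v))
      _ hsu (hc u).continuousOn (fun v _ => h_deriv u v)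
    rw [F_self, eq_div_iff (by linarith)] at hv'
    have h1 := hb s u (by rw [hu, sub_sub_cancel, abs_of_pos hδ])
    have hs := θ_mono hsu
    have h2 := θ_mono hv.1
    have h3 := θ_mono hv.2
    rw [abs_of_pos (by linarith)] at h1
    have h4 : sin (θ v - θ u) ≤ sin (θ s - θ u) :=
      sin_le_sin_of_le_of_le_pi_div_two (by linarith [pi_pos]) h1.le (by linarith)
    have h5 : 0 < sin (θ s - θ u) := sin_pos_of_pos_of_lt_pi (by linarith) (by linarith [pi_pos])
    have h6 := H u
    rw [key] at h6
    have h7 : sin (θ u - θ s) = -sin (θ s - θ u) := by rw [← sin_neg]; ring_nf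
    rw [h7] at h6
    rw [hu, sub_sub_cancel, ← hu] at hv'
    nlinarith

abbrev E := EuclideanSpace ℝ (Fin 2)

noncomputable def γ (s : ℝ) : E := !₂[X s, Y s]

def K : Set E := {y | ∀ s, F s (y 0) (y 1) ≤ 0}

lemma γ_mem (s : ℝ) : γ s ∈ K := fun u => by simpa [γ] using F_le u s

lemma F_cont_pt (s : ℝ) : Continuous (fun y : E => F s (y 0) (y 1)) := by
  unfold F; fun_prop

lemma X_cont : Continuous X := continuous_iff_continuousAt.2 fun u => (X_deriv u).continuousAt
lemma Y_cont : Continuous Y := continuous_iff_continuousAt.2 fun u => (Y_deriv u).continuousAt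

lemma F_cont_s (a b : ℝ) : Continuous (fun s => F s a b) := by
  have := X_cont
  have := Y_cont
  have := θ_cont
  unfold F; fun_prop

lemma K_closed : IsClosed K := by
  have : K = ⋂ s, {y : E | F s (y 0) (y 1) ≤ 0} := by ext; simp [K]
  rw [this]
  exact isClosed_iInter fun s => isClosed_le (F_cont_pt s) continuous_const

lemma K_convex : Convex ℝ K := by
  intro x hx y hy a b ha hb hab s
  have h1 := hx s
  have h2 := hy s
  have : F s ((a • x + b • y) 0) ((a • x + b • y) 1) =
      a * F s (x 0) (x 1) + b * F s (y 0) (y 1) := by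
    simp only [F, PiLp.add_apply, PiLp.smul_apply, smul_eq_mul]
    obtain rfl : b = 1 - a := by linarith
    ring
  rw [this]
  nlinarith

lemma K_compact : IsCompact K := by
  apply Metric.isCompact_of_isClosed_isBounded K_closed
  rw [Metric.isBounded_iff_subset_closedBall 0]
  set M := |Y π| + |X (π / 2)| + |X (π / 2 + π)| with hM
  refine ⟨2 * M, fun y hy => ?_⟩
  have h0 := hy 0
  have h1 := hy π
  have h2 := hy (π / 2)
  have h3 := hy (π / 2 + π)
  have θpi : θ π = π := by simpa [θ_zero] using θ_add_pi 0
  simp only [F, θ_add_pi, θpi, sin_pi, cos_pi, θ_zero, θ_pi_half, sin_add_pi, cos_add_pi, sin_zero, cos_zero,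
    sin_pi_div_two, cos_pi_div_two, Y_zero] at h0 h1 h2 h3
  simp at h0 h1 h2 h3
  have i1 := le_abs_self (Y π)
  have i2 := le_abs_self (X (π/2))
  have i3 := neg_abs_le (X (π/2+π))
  have j1 := abs_nonneg (Y π)
  have j2 := abs_nonneg (X (π/2))
  have j3 := abs_nonneg (X (π/2+π))
  rw [mem_closedBall_zero_iff, EuclideanSpace.norm_eq, Fin.sum_univ_two]
  simp only [Real.norm_eq_abs, sq_abs]
  apply Real.sqrt_le_iff.2
  refine ⟨by linarith, ?_⟩
  have : (y 0)^2 ≤ M^2 := sq_le_sq' (by linarith) (by linarith)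
  have : (y 1)^2 ≤ M^2 := sq_le_sq' (by linarith) (by linarith)
  nlinarith

lemma F_shift (s : ℝ) (p y : E) : F s (y 0) (y 1) ≤ F s (p 0) (p 1) + 2 * dist y p := by
  have e : F s (y 0) (y 1) = F s (p 0) (p 1) + ((y 0 - p 0) * sin (θ s) - (y 1 - p 1) * cos (θ s)) := by
    simp only [F]; ring
  have hd : ∀ i, |y i - p i| ≤ dist y p := fun i => by
    have := PiLp.norm_apply_le (y - p) i
    rwa [PiLp.sub_apply, Real.norm_eq_abs, ← dist_eq_norm] at this
  have h1 : (y 0 - p 0) * sin (θ s) ≤ dist y p := by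
    refine (le_abs_self _).trans ?_
    rw [abs_mul]
    nlinarith [hd 0, abs_sin_le_one (θ s), abs_nonneg (y 0 - p 0), abs_nonneg (sin (θ s))]
  have h2 : -((y 1 - p 1) * cos (θ s)) ≤ dist y p := by
    refine (neg_le_abs _).trans ?_
    rw [abs_mul]
    nlinarith [hd 1, abs_cos_le_one (θ s), abs_nonneg (y 1 - p 1), abs_nonneg (cos (θ s))]
  linarith

lemma mem_interior_of_neg (p : E) (hp : ∀ s, F s (p 0) (p 1) < 0) : p ∈ interior K := by
  obtain ⟨m, -, hm⟩ := isCompact_Icc.exists_isMaxOn (Set.nonempty_Icc.2 two_pi_pos.le)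
    (F_cont_s (p 0) (p 1)).continuousOn
  have hmax : ∀ s, F s (p 0) (p 1) ≤ F m (p 0) (p 1) := fun s => by
    obtain ⟨v, hv, hv'⟩ := (F_per (p 0) (p 1)).exists_mem_Ico₀ two_pi_pos s
    have hv'' : F s (p 0) (p 1) = F v (p 0) (p 1) := hv'
    rw [hv'']
    exact hm ⟨hv.1, hv.2.le⟩
  rw [mem_interior_iff_mem_nhds, Metric.mem_nhds_iff]
  refine ⟨-F m (p 0) (p 1) / 2, by linarith [hp m], fun y hy s => ?_⟩
  rw [Metric.mem_ball] at hy
  linarith [F_shift s p y, hmax s]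

lemma K_interior : (interior K).Nonempty :=
  ⟨!₂[X π / 2, Y π / 2], mem_interior_of_neg _ fun s => by simpa using center_neg s⟩

lemma frontier_eq : Set.range γ = frontier K := by
  apply Set.Subset.antisymm
  · rintro _ ⟨s, rfl⟩
    refine ⟨subset_closure (γ_mem s), fun hi => ?_⟩
    rw [mem_interior_iff_mem_nhds, Metric.mem_nhds_iff] at hi
    obtain ⟨ε, hε, h⟩ := hi
    have hm : (!₂[X s + ε / 2 * sin (θ s), Y s - ε / 2 * cos (θ s)] : E) ∈ Metric.ball (γ s) ε := by
      rw [Metric.mem_ball, EuclideanSpace.dist_eq, Fin.sum_univ_two, Real.sqrt_lt' hε]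
      simp only [Real.dist_eq, sq_abs, γ]
      simp
      nlinarith [sin_sq_add_cos_sq (θ s)]
    have := h hm s
    simp [F] at this
    nlinarith [sin_sq_add_cos_sq (θ s)]
  · intro p hp
    have hK : p ∈ K := K_closed.frontier_subset hp
    have : ∃ s, F s (p 0) (p 1) = 0 := by
      by_contra! hne
      exact hp.2 (mem_interior_of_neg p fun s => lt_of_le_of_ne (hK s) (hne s))
    obtain ⟨s, hs⟩ := this
    set c := (p 0 - X s) * cos (θ s) + (p 1 - Y s) * sin (θ s) with hc
    simp only [F] at hs
    have e0 : p 0 = X s + c * cos (θ s) := by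
      rw [hc]
      linear_combination sin (θ s) * hs - (p 0 - X s) * sin_sq_add_cos_sq (θ s)
    have e1 : p 1 = Y s + c * sin (θ s) := by
      rw [hc]
      linear_combination -cos (θ s) * hs - (p 1 - Y s) * sin_sq_add_cos_sq (θ s)
    have c0 : c = 0 := tangent_zero s c fun u => by rw [← e0, ← e1]; exact hK u
    rw [c0] at e0 e1
    refine ⟨s, ?_⟩
    ext i
    fin_cases i
    · simp [γ, e0]
    · simp [γ, e1]

lemma γ_deriv (s : ℝ) : HasDerivAt γ !₂[cos (θ s), sin (θ s)] s := by
  rw [← hasDerivWithinAt_univ, hasDerivWithinAt_iff_hasFDerivWithinAt, hasFDerivWithinAt_euclidean]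
  intro i
  fin_cases i
  · refine ((X_deriv s).hasDerivWithinAt.hasFDerivWithinAt).congr_fderiv ?_
    ext; simp
  · refine ((Y_deriv s).hasDerivWithinAt.hasFDerivWithinAt).congr_fderiv ?_
    ext; simp

lemma deriv_γ : deriv γ = fun s => (!₂[cos (θ s), sin (θ s)] : E) :=
  funext fun s => (γ_deriv s).deriv

lemma deriv_lip : LipschitzWith 2 (deriv γ) := by
  refine LipschitzWith.of_dist_le_mul fun a b => ?_
  rw [deriv_γ, EuclideanSpace.dist_eq, Fin.sum_univ_two]
  have h1 : dist (θ a) (θ b) ≤ 2 * dist a b := by simpa [Real.dist_eq] using θ_lip b a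
  refine le_trans ?_ h1
  apply Real.sqrt_le_iff.2
  refine ⟨dist_nonneg, ?_⟩
  simp only [Real.dist_eq, sq_abs]
  simp
  have h2 := Real.one_sub_sq_div_two_le_cos (x := θ a - θ b)
  rw [cos_sub] at h2
  nlinarith [sin_sq_add_cos_sq (θ a), sin_sq_add_cos_sq (θ b)]

lemma γ_c1 : ContDiff ℝ 1 γ := by
  rw [contDiff_one_iff_deriv]
  exact ⟨fun s => (γ_deriv s).differentiableAt, deriv_lip.continuous⟩

lemma γ_unit (s : ℝ) : ‖deriv γ s‖ = 1 := by
  rw [deriv_γ, EuclideanSpace.norm_eq, Fin.sum_univ_two]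
  simp

lemma proj_eq (s r : ℝ) (hr : 0 ≤ r) (q y : E) (h0 : q 0 = X s + r * sin (θ s))
    (h1 : q 1 = Y s - r * cos (θ s)) (hy : y ∈ K) (hd : dist q y = Metric.infDist q K) :
    y = γ s := by
  have hle : dist q y ≤ dist q (γ s) := hd ▸ Metric.infDist_le_dist_of_mem (γ_mem s)
  rw [EuclideanSpace.dist_eq, EuclideanSpace.dist_eq, Fin.sum_univ_two, Fin.sum_univ_two] at hle
  have hle := (Real.sqrt_le_sqrt_iff (by positivity)).1 hle
  simp only [Real.dist_eq, sq_abs] at hle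
  simp only [h0, h1, γ] at hle
  simp at hle
  have hF := hy s
  simp only [F] at hF
  have hF' := mul_nonpos_of_nonneg_of_nonpos hr hF
  have hsq : (y 0 - X s)^2 + (y 1 - Y s)^2 ≤ 0 := by nlinarith
  have e0 : y 0 = X s := by
    have : (y 0 - X s)^2 = 0 := le_antisymm (by nlinarith [sq_nonneg (y 1 - Y s)]) (sq_nonneg _)
    linarith [pow_eq_zero_iff (two_ne_zero) |>.1 this]
  have e1 : y 1 = Y s := by
    have : (y 1 - Y s)^2 = 0 := le_antisymm (by nlinarith [sq_nonneg (y 0 - X s)]) (sq_nonneg _)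
    linarith [pow_eq_zero_iff (two_ne_zero) |>.1 this]
  ext i
  fin_cases i
  · simp [γ, e0]
  · simp [γ, e1]

lemma ratio {φ : ℝ → ℝ} {c : ℝ} (h : HasDerivAt φ c 0) (h0 : φ 0 = 0) {u : ℕ → ℝ}
    (hu : Tendsto u atTop (𝓝 0)) (hne : ∀ k, u k ≠ 0) :
    Tendsto (fun k => φ (u k) / u k) atTop (𝓝 c) := by
  have h1 := hasDerivAt_iff_tendsto_slope.1 h
  have h2 : Tendsto u atTop (𝓝[≠] 0) :=
    tendsto_nhdsWithin_iff.2 ⟨hu, Eventually.of_forall hne⟩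
  refine (h1.comp h2).congr fun k => ?_
  simp [slope_def_field, h0]

/-- times `t` along the line through `x` whose projections are `γ s`. -/
noncomputable def T (s : ℝ) : ℝ := X s + (1 + Y s) * tan (θ s)

lemma limit_seq (α : ℝ) (hα : α ≤ π / 2) : ∃ s : ℕ → ℝ, (∀ k, 0 < s k) ∧ Tendsto s atTop (𝓝 0) ∧
    Tendsto (fun k => T (s k) / s k) atTop (𝓝 (2 + sin α / 4)) := by
  have hr : ∀ k : ℕ, α - (k + 1 : ℕ) * (2 * π) < 0 := fun k => by
    push_cast
    nlinarith [pi_pos, (Nat.cast_nonneg k : (0:ℝ) ≤ k)]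
  set r : ℕ → ℝ := fun k => exp (α - (k + 1 : ℕ) * (2 * π)) with hrdef
  have hr0 : ∀ k, 0 < r k := fun k => exp_pos _
  have hr1 : ∀ k, r k < 1 := fun k => by
    have := exp_lt_exp.2 (hr k)
    rwa [exp_zero] at this
  have hrt : Tendsto r atTop (𝓝 0) := by
    apply tendsto_exp_atBot.comp
    apply tendsto_atBot_add_const_left
    apply tendsto_neg_atTop_atBot.comp
    apply Tendsto.atTop_mul_const two_pi_pos
    exact tendsto_natCast_atTop_atTop.comp (tendsto_add_atTop_nat 1)
  set s : ℕ → ℝ := fun k => arcsin (r k) with hs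
  have hs0 : ∀ k, 0 < s k := fun k => arcsin_pos.2 (hr0 k)
  have hst : Tendsto s atTop (𝓝 0) := by
    have := (continuous_arcsin.tendsto 0).comp hrt
    rwa [arcsin_zero] at this
  have hsin : ∀ k, sin (s k) = r k := fun k => sin_arcsin (by linarith [hr0 k]) (hr1 k).le
  refine ⟨s, hs0, hst, ?_⟩
  have hne : ∀ k, s k ≠ 0 := fun k => (hs0 k).ne'
  have hθ : ∀ k, θ (s k) = s k + sin (s k) * sin α / 4 := fun k => by
    rw [θ, hsin, abs_of_pos (hr0 k), f, hrdef]
    simp only [log_exp]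
    rw [sin_sub_nat_mul_two_pi]
  have A1 : Tendsto (fun k => sin (s k) / s k) atTop (𝓝 1) := by
    have := ratio (by simpa using hasDerivAt_sin 0) sin_zero hst hne
    exact this
  have A2 : Tendsto (fun k => X (s k) / s k) atTop (𝓝 1) :=
    ratio (by simpa [θ_zero] using X_deriv 0) X_zero hst hne
  have A3 : Tendsto (fun k => Y (s k)) atTop (𝓝 0) := by
    have := (Y_cont.tendsto 0).comp hst
    rwa [Y_zero] at this
  have hθt : Tendsto (fun k => θ (s k)) atTop (𝓝 0) := by
    have := (θ_cont.tendsto 0).comp hst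
    rwa [θ_zero] at this
  have hθne : ∀ k, θ (s k) ≠ 0 := fun k => by
    have := θ_mono (hs0 k)
    rw [θ_zero] at this
    exact this.ne'
  have A4 : Tendsto (fun k => tan (θ (s k)) / θ (s k)) atTop (𝓝 1) :=
    ratio (by simpa using hasDerivAt_tan (x := 0) (by simp)) tan_zero hθt hθne
  have A5 : Tendsto (fun k => θ (s k) / s k) atTop (𝓝 (1 + 1 * (sin α / 4))) := by
    refine ((A1.mul_const (sin α / 4)).const_add 1).congr fun k => ?_
    rw [hθ k]
    have := hne k
    field_simp
  have B := A2.add ((A3.const_add 1).mul (A4.mul A5))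
  have e : 1 + (1 + 0) * (1 * (1 + 1 * (sin α / 4))) = 2 + sin α / 4 := by ring
  rw [e] at B
  refine B.congr fun k => ?_
  have h1 := hne k
  have h2 := hθne k
  rw [T]
  field_simp

lemma coord (P : E → E) (hP : ∀ y, P y ∈ K ∧ dist y (P y) = Metric.infDist y K) (L : E)
    (hL : Tendsto (fun t : ℝ => t⁻¹ • (P (!₂[0, -1] + t • !₂[1, 0]) - P !₂[0, -1]))
      (𝓝[>] 0) (𝓝 L)) (α : ℝ) (hα : α ≤ π / 2) : L 0 = 1 / (2 + sin α / 4) := by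
  obtain ⟨s, hs0, hst, hT⟩ := limit_seq α hα
  have hne : ∀ k, s k ≠ 0 := fun k => (hs0 k).ne'
  have hpos : 0 < 2 + sin α / 4 := by linarith [neg_one_le_sin α]
  have hTt : Tendsto (fun k => T (s k)) atTop (𝓝 0) := by
    have := hT.mul hst
    rw [mul_zero] at this
    exact this.congr fun k => by have := hne k; field_simp
  have hTpos : ∀ᶠ k in atTop, 0 < T (s k) := by
    filter_upwards [hT.eventually_const_lt hpos] with k hk
    have := mul_pos hk (hs0 k)
    rwa [div_mul_cancel₀ _ (hne k)] at this
  have hTw : Tendsto (fun k => T (s k)) atTop (𝓝[>] 0) :=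
    tendsto_nhdsWithin_iff.2 ⟨hTt, hTpos⟩
  have hX : Tendsto (fun k => X (s k) / s k) atTop (𝓝 1) :=
    ratio (by simpa [θ_zero] using X_deriv 0) X_zero hst hne
  have hlim := hX.div hT hpos.ne'
  have hl2 : Tendsto (fun y : E => y 0) (𝓝 L) (𝓝 (L 0)) :=
    (by fun_prop : Continuous fun y : E => y 0).tendsto L
  have hl := hl2.comp (hL.comp hTw)
  refine tendsto_nhds_unique hl (hlim.congr' ?_)
  have hY : ∀ᶠ k in atTop, -1 < Y (s k) := by
    have := (Y_cont.tendsto 0).comp hst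
    rw [Y_zero] at this
    exact this.eventually_const_lt (by norm_num)
  have hcos : ∀ᶠ k in atTop, 0 < cos (θ (s k)) := by
    have := ((continuous_cos.comp θ_cont).tendsto 0).comp hst
    simp only [Function.comp_apply, θ_zero, cos_zero] at this
    exact this.eventually_const_lt (by norm_num)
  have hP0 : P !₂[0, -1] = γ 0 :=
    proj_eq 0 1 (by norm_num) _ _ (by simp [X_zero, θ_zero]) (by simp [Y_zero, θ_zero])
      (hP _).1 (hP _).2
  filter_upwards [hTpos, hY, hcos] with k h1 h2 h3
  have hPk : P (!₂[0, -1] + T (s k) • !₂[1, 0]) = γ (s k) := by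
    refine proj_eq (s k) ((1 + Y (s k)) / cos (θ (s k)))
      (div_nonneg (by linarith) h3.le) _ _ ?_ ?_ (hP _).1 (hP _).2
    · simp [T, tan_eq_sin_div_cos]
      ring
    · simp
      field_simp
      ring
  simp only [Function.comp_apply, hPk, hP0]
  have := hne k
  simp [γ, X_zero]
  field_simp

end ProjCex



/-- There is a compact convex set `K ⊂ ℝ²` with nonempty interior and `C^{1,1}` boundary
(a `C¹` unit-speed boundary parametrization with Lipschitz derivative), a point `x ∉ K`
and a nonzero direction `w`, such that the one-sided directional derivative
`lim_{t→0⁺} (Π(x + t w) − Π(x))/t` of the metric projection `Π` onto `K` does not exist. -/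
theorem exists_C11_convex_body_projection_not_one_sided_differentiable :
    ∃ K : Set (EuclideanSpace ℝ (Fin 2)),
      IsCompact K ∧ Convex ℝ K ∧ (interior K).Nonempty ∧
      (∃ z : ℝ → EuclideanSpace ℝ (Fin 2),
        ContDiff ℝ 1 z ∧ Set.range z = frontier K ∧ (∀ s, ‖deriv z s‖ = 1) ∧
        ∃ L : NNReal, LipschitzWith L (deriv z)) ∧
      ∃ x : EuclideanSpace ℝ (Fin 2), x ∉ K ∧
        ∃ w : EuclideanSpace ℝ (Fin 2), w ≠ 0 ∧
          ∀ P : EuclideanSpace ℝ (Fin 2) → EuclideanSpace ℝ (Fin 2),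
            (∀ y, P y ∈ K ∧ dist y (P y) = Metric.infDist y K) →
            ¬ ∃ L : EuclideanSpace ℝ (Fin 2),
                Filter.Tendsto (fun t : ℝ => t⁻¹ • (P (x + t • w) - P x))
                  (nhdsWithin 0 (Set.Ioi 0)) (nhds L) := by

  refine ⟨ProjCex.K, ProjCex.K_compact, ProjCex.K_convex, ProjCex.K_interior,
    ⟨ProjCex.γ, ProjCex.γ_c1, ProjCex.frontier_eq, ProjCex.γ_unit, 2, ProjCex.deriv_lip⟩,
    !₂[0, -1], ?_, !₂[1, 0], ?_, ?_⟩
  · intro h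
    have := h 0
    simp [ProjCex.F, ProjCex.θ_zero, ProjCex.X_zero, ProjCex.Y_zero] at this
    linarith
  · intro h
    have := congrArg (fun v : EuclideanSpace ℝ (Fin 2) => v 0) h
    simp at this
  · rintro P hP ⟨L, hL⟩
    have h1 := ProjCex.coord P hP L hL 0 (by positivity)
    have h2 := ProjCex.coord P hP L hL (Real.pi / 2) le_rfl
    rw [h1] at h2
    simp at h2
end

section
/- Let K ⊂ ℝ³ be a compact convex body whose boundary is a twice continuously differentiable surface (a C² two-dimensional submanifold of ℝ³), let Π be the metric projection onto K, and let c : ℝ → ℝ³ \ K be a differentiable curve. Then the one-sided derivative lim_{t→0⁺} (Π(c(t)) − Π(c(0)))/t exists. -/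
open Filter Topology

abbrev E3 := EuclideanSpace ℝ (Fin 3)

lemma aux_unique {K : Set E3} {x v v' : E3} (hv : v ∈ K) (hv' : v' ∈ K)
    (h : ∀ w ∈ K, inner ℝ (x - v) (w - v) ≤ 0) (h' : ∀ w ∈ K, inner ℝ (x - v') (w - v') ≤ 0) :
    v = v' := by
  have h1 := h v' hv'
  have h2 := h' v hv
  have h3 : inner ℝ (v' - v) (v' - v) = inner ℝ (x - v) (v' - v) + inner ℝ (x - v') (v - v') := by
    rw [← neg_sub v' v, inner_neg_right, ← sub_eq_add_neg, ← inner_sub_left]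
    congr 1
    abel
  have h4 : inner ℝ (v' - v) (v' - v) ≤ 0 := by rw [h3]; linarith
  have h5 : v' - v = 0 := by
    by_contra hne
    exact absurd (real_inner_self_pos.mpr hne) (not_lt.mpr h4)
  exact (sub_eq_zero.mp h5).symm

lemma aux_proj {K : Set E3} (hK : Convex ℝ K) {y v : E3} (hv : v ∈ K)
    (hd : dist y v = Metric.infDist y K) : ∀ w ∈ K, inner ℝ (y - v) (w - v) ≤ 0 := by
  rw [← norm_eq_iInf_iff_real_inner_le_zero hK hv, ← dist_eq_norm, hd, Metric.infDist_eq_iInf]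
  simp only [dist_eq_norm]

lemma aux_strict {K : Set E3} {n p z : E3} (hn : n ≠ 0) (h : ∀ w ∈ K, inner ℝ n (w - p) ≤ 0)
    (hz : z ∈ interior K) : inner ℝ n (z - p) < 0 := by
  have hc : Tendsto (fun e : ℝ => z + e • n) (𝓝[>] 0) (𝓝 z) := by
    have : Continuous (fun e : ℝ => z + e • n) := by fun_prop
    have h0 := this.tendsto 0
    simp only [zero_smul, add_zero] at h0
    exact h0.mono_left nhdsWithin_le_nhds
  have h1 : ∀ᶠ e : ℝ in 𝓝[>] 0, z + e • n ∈ K := hc.eventually (mem_interior_iff_mem_nhds.mp hz)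
  obtain ⟨e, he, he0⟩ := (h1.and self_mem_nhdsWithin).exists
  have h2 := h _ he
  rw [add_sub_right_comm, inner_add_right, inner_smul_right] at h2
  have h3 : 0 < inner ℝ n n := real_inner_self_pos.mpr hn
  have := mul_pos (show (0:ℝ) < e from he0) h3
  linarith

lemma aux_support {K : Set E3} (hK : Convex ℝ K) (hi : (interior K).Nonempty) {y : E3}
    (hy : y ∉ interior K) : ∃ m : E3, m ≠ 0 ∧ ∀ w ∈ K, inner ℝ m (w - y) ≤ 0 := by
  obtain ⟨f, hf⟩ := geometric_hahn_banach_open_point hK.interior isOpen_interior hy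
  obtain ⟨z, hz⟩ := hi
  let m : E3 := (InnerProductSpace.toDual ℝ E3).symm f
  have hm : ∀ w, inner ℝ m w = f w := fun w => InnerProductSpace.toDual_symm_apply
  refine ⟨m, ?_, ?_⟩
  · intro h0
    have h1 := hf z hz
    rw [← hm, ← hm, h0] at h1
    simp at h1
  · intro w hw
    rw [hm, map_sub]
    have hw' : w ∈ closure (interior K) := by
      rw [hK.closure_interior_eq_closure_of_nonempty_interior ⟨z, hz⟩]
      exact subset_closure hw
    have : closure (interior K) ⊆ {w | f w ≤ f y} :=
      closure_minimal (fun a ha => (hf a ha).le) (isClosed_le f.continuous continuous_const)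
    have : f w ≤ f y := this hw'
    linarith

lemma aux_parallel (A : (ℝ × ℝ) →L[ℝ] E3) (hA : Function.Injective A) {m u : E3} (hm : m ≠ 0)
    (h1 : ∀ h, inner ℝ m (A h) = 0) (h2 : ∀ h, inner ℝ u (A h) = 0) : ∃ c : ℝ, c • m = u := by
  let R : Submodule ℝ E3 := LinearMap.range (A : (ℝ × ℝ) →ₗ[ℝ] E3)
  have hR : Module.finrank ℝ R = 2 := by
    have := LinearMap.finrank_range_of_inj (f := (A : (ℝ × ℝ) →ₗ[ℝ] E3)) hA
    rw [this]; simp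
  have hR' : Module.finrank ℝ Rᗮ = 1 := by
    have := Submodule.finrank_add_finrank_orthogonal R
    rw [hR] at this
    simp at this
    omega
  have hmem : ∀ v : E3, (∀ h, inner ℝ v (A h) = 0) → v ∈ Rᗮ := by
    intro v hv
    rw [Submodule.mem_orthogonal']
    rintro _ ⟨h, rfl⟩
    exact hv h
  have hm0 : (⟨m, hmem m h1⟩ : Rᗮ) ≠ 0 := by
    intro h; exact hm (congrArg Subtype.val h)
  obtain ⟨c, hc⟩ := (finrank_eq_one_iff_of_nonzero' _ hm0).mp hR' ⟨u, hmem u h2⟩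
  exact ⟨c, congrArg Subtype.val hc⟩

lemma aux_crit {K : Set E3} {U : Set (ℝ × ℝ)} {σ : ℝ × ℝ → E3} (hU : IsOpen U)
    (hσ : σ '' U ⊆ K) {q : ℝ × ℝ} (hq : q ∈ U) (hd : DifferentiableAt ℝ σ q) {m : E3}
    (hm : ∀ w ∈ K, inner ℝ m (w - σ q) ≤ 0) (h : ℝ × ℝ) : inner ℝ m (fderiv ℝ σ q h) = 0 := by
  have hmax : IsLocalMax (fun x => innerSL ℝ m (σ x)) q := by
    filter_upwards [hU.mem_nhds hq] with x hx
    have := hm _ (hσ ⟨x, hx, rfl⟩)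
    rw [inner_sub_right] at this
    simp only [innerSL_apply_apply]
    linarith
  have hD := ((innerSL ℝ m).hasFDerivAt (x := σ q)).comp q hd.hasFDerivAt
  have h0 := hmax.hasFDerivAt_eq_zero hD
  have := DFunLike.congr_fun h0 h
  simpa using this

lemma aux_normal {K : Set E3} (hK : Convex ℝ K) (hi : (interior K).Nonempty)
    {U : Set (ℝ × ℝ)} {σ : ℝ × ℝ → E3} (hU : IsOpen U)
    (hσ : σ '' U ⊆ K) {q : ℝ × ℝ} (hq : q ∈ U) (hd : DifferentiableAt ℝ σ q)
    (hni : σ q ∉ interior K) (hinj : Function.Injective (fderiv ℝ σ q)) {u z : E3}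
    (hu : ∀ h, inner ℝ u (fderiv ℝ σ q h) = 0) (hz : z ∈ K) (huz : inner ℝ u (z - σ q) < 0) :
    ∀ w ∈ K, inner ℝ u (w - σ q) ≤ 0 := by
  obtain ⟨m, hm0, hm⟩ := aux_support hK hi hni
  obtain ⟨c, rfl⟩ := aux_parallel _ hinj hm0 (aux_crit hU hσ hq hd hm) hu
  have hmz := hm z hz
  rw [real_inner_smul_left] at huz
  have hc : 0 ≤ c := by
    by_contra hc
    nlinarith
  intro w hw
  rw [real_inner_smul_left]
  exact mul_nonpos_of_nonneg_of_nonpos hc (hm w hw)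

lemma aux_second {σ : ℝ × ℝ → E3} {q : ℝ × ℝ} (hσ : ContDiffAt ℝ 2 σ q) {n : E3}
    (hmax : ∀ᶠ x in 𝓝 q, inner ℝ n (σ x) ≤ inner ℝ n (σ q)) (h : ℝ × ℝ) :
    inner ℝ n (fderiv ℝ (fderiv ℝ σ) q h h) ≤ 0 := by
  let φ : ℝ → ℝ := fun t => inner ℝ n (σ (q + t • h))
  let ψ : ℝ → ℝ := fun t => inner ℝ n (fderiv ℝ σ (q + t • h) h)
  have hline : ∀ t : ℝ, HasDerivAt (fun t : ℝ => q + t • h) h t := by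
    intro t
    simpa using ((hasDerivAt_id t).smul_const h).const_add q
  have hlt : Tendsto (fun t : ℝ => q + t • h) (𝓝 0) (𝓝 q) := by
    simpa using (hline 0).continuousAt.tendsto
  have hdiff : ∀ᶠ x in 𝓝 q, DifferentiableAt ℝ σ x := by
    filter_upwards [hσ.eventually (by simp)] with x hx
    exact hx.differentiableAt (by simp)
  have h1 : ∀ᶠ t in 𝓝 (0:ℝ), HasDerivAt φ (ψ t) t := by
    filter_upwards [hlt.eventually hdiff] with t ht
    have := ht.hasFDerivAt.comp_hasDerivAt t (hline t)
    exact ((innerSL ℝ n).hasFDerivAt.comp_hasDerivAt t this)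
  have hD2 : DifferentiableAt ℝ (fderiv ℝ σ) q :=
    (hσ.fderiv_right (m := 1) (by norm_num)).differentiableAt (by simp)
  have h2 : HasDerivAt ψ (inner ℝ n (fderiv ℝ (fderiv ℝ σ) q h h)) 0 := by
    have hq : HasFDerivAt (fderiv ℝ σ) (fderiv ℝ (fderiv ℝ σ) q) (q + (0:ℝ) • h) := by
      simpa using hD2.hasFDerivAt
    have := hq.comp_hasDerivAt (0:ℝ) (hline 0)
    have := this.clm_apply (hasDerivAt_const (0:ℝ) h)
    have := ((innerSL ℝ n).hasFDerivAt.comp_hasDerivAt (0:ℝ) this)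
    simpa [ψ, Function.comp_def] using this
  have hφmax : IsLocalMax φ 0 := by
    filter_upwards [hlt.eventually hmax] with t ht
    simpa [φ] using ht
  have hderiv : deriv φ =ᶠ[𝓝 0] ψ := h1.mono fun t ht => ht.deriv
  by_contra hpos
  push Not at hpos
  have hdd : deriv (deriv φ) 0 = inner ℝ n (fderiv ℝ (fderiv ℝ σ) q h h) := by
    rw [hderiv.deriv_eq, h2.deriv]
  have hmin : IsLocalMin φ 0 := isLocalMin_of_deriv_deriv_pos (by rw [hdd]; exact hpos)
    hφmax.deriv_eq_zero h1.self_of_nhds.continuousAt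
  have hconst : φ =ᶠ[𝓝 0] fun _ => φ 0 := by
    filter_upwards [hφmax, hmin] with t h1 h2
    exact le_antisymm h1 h2
  have : deriv φ =ᶠ[𝓝 0] fun _ => 0 := by
    have := hconst.deriv
    simpa using this
  rw [this.deriv_eq] at hdd
  simp at hdd
  linarith

lemma aux_inv (B : (ℝ × ℝ) →L[ℝ] ((ℝ × ℝ) →L[ℝ] ℝ)) (hB : Function.Injective B) :
    B.IsInvertible := by
  have hfr : Module.finrank ℝ (ℝ × ℝ) = Module.finrank ℝ ((ℝ × ℝ) →L[ℝ] ℝ) := by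
    rw [← LinearEquiv.finrank_eq (LinearMap.toContinuousLinearMap (𝕜 := ℝ) (E := ℝ × ℝ) (F' := ℝ))]
    simp
  let e := (LinearMap.linearEquivOfInjective (B : (ℝ × ℝ) →ₗ[ℝ] ((ℝ × ℝ) →L[ℝ] ℝ)) hB hfr)
  refine ⟨e.toContinuousLinearEquiv, ?_⟩
  exact ContinuousLinearMap.ext fun v => rfl

lemma aux_main {σ : ℝ × ℝ → E3} {q : ℝ × ℝ} (hσ : ContDiffAt ℝ 2 σ q) {x : E3}
    (hinj : Function.Injective (fderiv ℝ σ q))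
    (hmax : ∀ᶠ y in 𝓝 q, inner ℝ (x - σ q) (σ y) ≤ inner ℝ (x - σ q) (σ q))
    (hcrit : ∀ h, inner ℝ (x - σ q) (fderiv ℝ σ q h) = 0) :
    ∃ ψ : E3 → ℝ × ℝ, DifferentiableAt ℝ ψ x ∧ ψ x = q ∧
      ∀ᶠ y in 𝓝 x, ∀ h, inner ℝ (y - σ (ψ y)) (fderiv ℝ σ (ψ y) h) = 0 := by
  let F : E3 × (ℝ × ℝ) → ((ℝ × ℝ) →L[ℝ] ℝ) := fun v =>
    (innerSL ℝ (v.1 - σ v.2)).comp (fderiv ℝ σ v.2)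
  have hs : HasStrictFDerivAt σ (fderiv ℝ σ q) q := hσ.hasStrictFDerivAt (by simp)
  have hs2 : HasStrictFDerivAt (fderiv ℝ σ) (fderiv ℝ (fderiv ℝ σ) q) q :=
    (hσ.fderiv_right (m := 1) (by norm_num)).hasStrictFDerivAt (by simp)
  have hsnd : HasStrictFDerivAt (Prod.snd : E3 × (ℝ × ℝ) → ℝ × ℝ)
    (ContinuousLinearMap.snd ℝ E3 (ℝ × ℝ)) (x, q) := hasStrictFDerivAt_snd
  have hfst : HasStrictFDerivAt (Prod.fst : E3 × (ℝ × ℝ) → E3)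
    (ContinuousLinearMap.fst ℝ E3 (ℝ × ℝ)) (x, q) := hasStrictFDerivAt_fst
  have ha := hfst.sub (HasStrictFDerivAt.comp (x, q) (g := σ) hs hsnd)
  have ha' := HasStrictFDerivAt.comp (x, q) (innerSL ℝ (E := E3)).hasStrictFDerivAt ha
  have hb := HasStrictFDerivAt.comp (x, q) (g := fderiv ℝ σ) hs2 hsnd
  have hF := ha'.clm_comp hb
  change HasStrictFDerivAt F _ _ at hF
  obtain ⟨F', hF', hval⟩ : ∃ F' : E3 × (ℝ × ℝ) →L[ℝ] ((ℝ × ℝ) →L[ℝ] ℝ),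
      HasStrictFDerivAt F F' (x, q) ∧ ∀ h, F' (0, h) h =
        inner ℝ (x - σ q) (fderiv ℝ (fderiv ℝ σ) q h h)
          - inner ℝ (fderiv ℝ σ q h) (fderiv ℝ σ q h) := by
    refine ⟨_, hF, fun h => ?_⟩
    rw [inner_sub_left]
    simp [-inner_self_eq_norm_sq_to_K]
    rw [innerSL_apply_apply, innerSL_apply_apply, innerSL_apply_apply, ← sub_eq_add_neg]
  have hinv : (F' ∘L .inr ℝ E3 (ℝ × ℝ)).IsInvertible := by
    apply aux_inv
    rw [injective_iff_map_eq_zero]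
    intro h hh
    have h1 := hval h
    have h2 : F' (0, h) h = 0 := by
      have := DFunLike.congr_fun hh h
      simpa using this
    rw [h2] at h1
    have h3 := aux_second hσ hmax h
    have h4 : fderiv ℝ σ q h = 0 := by
      by_contra hne
      have := real_inner_self_pos.mpr hne
      linarith
    exact hinj (by rw [h4, map_zero])
  have hF0 : F (x, q) = 0 := by
    exact ContinuousLinearMap.ext fun h => hcrit h
  refine ⟨hF'.implicitFunctionOfProdDomain hinv,
    (hF'.hasStrictFDerivAt_implicitFunctionOfProdDomain hinv).hasFDerivAt.differentiableAt,
    (hF'.eventually_apply_eq_iff_implicitFunctionOfProdDomain hinv).self_of_nhds.mp rfl, ?_⟩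
  filter_upwards [hF'.eventually_apply_implicitFunctionOfProdDomain hinv] with y hy h
  rw [hF0] at hy
  have := DFunLike.congr_fun hy h
  exact this

/-- If `K ⊂ ℝ³` is a compact convex body whose boundary is a `C²` surface (locally the
image of a `C²` immersed injective parametrization), `Π` is the metric projection onto
`K`, and `c` is a differentiable curve staying outside `K`, then the one-sided derivative
`lim_{t→0⁺} (Π(c(t)) − Π(c(0)))/t` exists. -/
theorem projection_one_sided_deriv_exists_of_C2_boundary
    (K : Set (EuclideanSpace ℝ (Fin 3)))
    (hKcomp : IsCompact K) (hKconv : Convex ℝ K) (hKint : (interior K).Nonempty)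
    (hsurf : ∀ p ∈ frontier K,
      ∃ (U : Set (ℝ × ℝ)) (σ : ℝ × ℝ → EuclideanSpace ℝ (Fin 3)),
        IsOpen U ∧ ContDiffOn ℝ 2 σ U ∧ Set.InjOn σ U ∧
        (∀ q ∈ U, Function.Injective (fderivWithin ℝ σ U q)) ∧
        σ '' U ⊆ frontier K ∧ σ '' U ∈ nhdsWithin p (frontier K))
    (P : EuclideanSpace ℝ (Fin 3) → EuclideanSpace ℝ (Fin 3))
    (hP : ∀ y, P y ∈ K ∧ dist y (P y) = Metric.infDist y K)
    (c : ℝ → EuclideanSpace ℝ (Fin 3))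
    (hc : Differentiable ℝ c) (hout : ∀ t, c t ∉ K) :
    ∃ L : EuclideanSpace ℝ (Fin 3),
      Filter.Tendsto (fun t : ℝ => t⁻¹ • (P (c t) - P (c 0)))
        (nhdsWithin 0 (Set.Ioi 0)) (nhds L) := by
  have hproj : ∀ y, ∀ w ∈ K, inner ℝ (y - P y) (w - P y) ≤ 0 := fun y =>
    aux_proj hKconv (hP y).1 (hP y).2
  have hn : c 0 - P (c 0) ≠ 0 := by
    intro h
    exact hout 0 (by rw [sub_eq_zero.mp h]; exact (hP _).1)
  have hni : P (c 0) ∉ interior K := by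
    intro h
    have := aux_strict hn (hproj (c 0)) h
    simp at this
  have hfr : frontier K ⊆ K := hKcomp.isClosed.frontier_subset
  have hp : P (c 0) ∈ frontier K := ⟨subset_closure (hP _).1, hni⟩
  obtain ⟨U, σ, hU, hσ, -, himm, hsub, hnhd⟩ := hsurf _ hp
  obtain ⟨q, hq, hqp⟩ := mem_of_mem_nhdsWithin hp hnhd
  have hsubK : σ '' U ⊆ K := hsub.trans hfr
  have hcd : ∀ y ∈ U, ContDiffAt ℝ 2 σ y := fun y hy => hσ.contDiffAt (hU.mem_nhds hy)
  have hdiff : ∀ y ∈ U, DifferentiableAt ℝ σ y := fun y hy =>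
    (hcd y hy).differentiableAt (by simp)
  have hinj : ∀ y ∈ U, Function.Injective (fderiv ℝ σ y) := fun y hy => by
    rw [← fderivWithin_of_isOpen hU hy]
    exact himm y hy
  have hpr : ∀ w ∈ K, inner ℝ (c 0 - σ q) (w - σ q) ≤ 0 := by
    rw [hqp]; exact hproj (c 0)
  have hcrit := aux_crit hU hsubK hq (hdiff q hq) hpr
  obtain ⟨ψ, hψd, hψq, hψ⟩ := aux_main (hcd q hq) (hinj q hq) (x := c 0) (by
    filter_upwards [hU.mem_nhds hq] with y hy
    have := hpr _ (hsubK ⟨y, hy, rfl⟩)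
    rw [inner_sub_right] at this
    linarith) hcrit
  obtain ⟨z, hz⟩ := hKint
  have hψc : ContinuousAt ψ (c 0) := hψd.continuousAt
  have hσd : DifferentiableAt ℝ σ (ψ (c 0)) := by rw [hψq]; exact hdiff q hq
  have hcomp : DifferentiableAt ℝ (fun y => σ (ψ y)) (c 0) := hσd.comp (c 0) hψd
  have hU' : ∀ᶠ y in 𝓝 (c 0), ψ y ∈ U := hψc.eventually (by rw [hψq]; exact hU.mem_nhds hq)
  have hneg : ∀ᶠ y in 𝓝 (c 0), inner ℝ (y - σ (ψ y)) (z - σ (ψ y)) < 0 := by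
    have hcont : ContinuousAt (fun y => inner ℝ (y - σ (ψ y)) (z - σ (ψ y))) (c 0) :=
      (continuousAt_id.sub hcomp.continuousAt).inner
        (continuousAt_const.sub hcomp.continuousAt)
    refine hcont.eventually (gt_mem_nhds ?_)
    simp only [hψq, hqp]
    exact aux_strict hn (hproj (c 0)) hz
  have hPeq : P =ᶠ[𝓝 (c 0)] fun y => σ (ψ y) := by
    filter_upwards [hψ, hU', hneg] with y h1 h2 h3
    refine aux_unique (hP y).1 (hsubK ⟨_, h2, rfl⟩) (hproj y) ?_
    exact aux_normal hKconv ⟨z, hz⟩ hU hsubK h2 (hdiff _ h2) (hsub ⟨_, h2, rfl⟩).2 (hinj _ h2) h1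
      (interior_subset hz) h3
  have hPd : DifferentiableAt ℝ P (c 0) := hcomp.congr_of_eventuallyEq hPeq
  have hder := hPd.hasFDerivAt.comp_hasDerivAt 0 (hc 0).hasDerivAt
  have := hder.tendsto_slope_zero_right
  refine ⟨_, by simpa using this⟩
end
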